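/- Let B be a blocking set of Rédei type in PG(2,q) with Rédei line ℓ. (1) If there is a point in B∖ℓ which is not contained in any bisecant of B, then B is minimal and |ℓ ∩ B| ≡ 1 (mod p). (2) If R, R' ∈ B∖ℓ are such that neither R nor R' is contained in a bisecant of B, then for every point M ∈ ℓ the lines RM and R'M meet B in the same number of points, i.e. |RM ∩ B| = |R'M ∩ B|. -/

import Mathlib

/-! Common setup: the Desarguesian projective plane `PG(2,q)` over a finite field `F = GF(q)`.
Points are the projective points of `F³`; lines are the 2-dimensional linear subspaces of `F³`,
with incidence given by containment. -/

/-- Points of `PG(2,F)`. -/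
abbrev PGPoint (F : Type*) [Field F] := Projectivization F (Fin 3 → F)

/-- Lines of `PG(2,F)`: the 2-dimensional linear subspaces of `F³`. -/
abbrev PGLine (F : Type*) [Field F] := {W : Submodule F (Fin 3 → F) // Module.finrank F W = 2}

/-- Incidence between a point and a line of `PG(2,F)`. -/
def pgMem {F : Type*} [Field F] (P : PGPoint F) (L : PGLine F) : Prop :=
  P.submodule ≤ L.val

/-- The number of points of the point set `B` lying on the line `L`;
`L` is a *`k`-secant* of `B` if `nsec B L = k`, a *tangent* if `k = 1`,
a *bisecant* if `k = 2` and a *trisecant* if `k = 3`. -/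
noncomputable def nsec {F : Type*} [Field F] (B : Set (PGPoint F)) (L : PGLine F) : ℕ :=
  {P ∈ B | pgMem P L}.ncard

/-- A blocking set: a point set meeting every line. -/
def isBlocking {F : Type*} [Field F] (B : Set (PGPoint F)) : Prop :=
  ∀ L : PGLine F, ∃ P ∈ B, pgMem P L

/-- A minimal blocking set: every point is essential. -/
def isMinimalBlocking {F : Type*} [Field F] (B : Set (PGPoint F)) : Prop :=
  isBlocking B ∧ ∀ P ∈ B, ¬ isBlocking (B \ {P})

/-- `B` is a blocking set of Rédei type with Rédei line `ℓ`: a blocking set of size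
`q + N ≤ 2q` such that `ℓ` meets `B` in exactly `N = |B| − q` points. -/
def isRedeiWithLine {F : Type*} [Field F] (q : ℕ) (B : Set (PGPoint F)) (ℓ : PGLine F) : Prop :=
  isBlocking B ∧ B.ncard ≤ 2 * q ∧ nsec B ℓ + q = B.ncard

/-- A semioval: through each of its points there passes exactly one tangent. -/
def isSemioval {F : Type*} [Field F] (S : Set (PGPoint F)) : Prop :=
  ∀ P ∈ S, ∃! t : PGLine F, pgMem P t ∧ nsec S t = 1

/-! For `R ∈ B ∖ ℓ`, let `f_R(y) = ∏ (y * (a_P - a_R) - (b_P - b_R))` over the points `P ≠ R` of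
`B ∖ ℓ`, in affine coordinates `(a, b)` with `ℓ` at infinity, such that the common point at infinity
of the lines `a = c` is not in `B`. The set `B ∖ ℓ` has exactly `q` points.

If the slope `y` gives a point of `ℓ` outside `B`, then each of the `q` affine lines of slope `y`
contains exactly one point of `B ∖ ℓ`, so `f_R(y)` is the product of all nonzero field elements,
which is `-1`. If `y` gives a point of `ℓ ∩ B` and `R` is on no bisecant, then the line of slope `y`
through `R` contains another point of `B ∖ ℓ`, so `f_R(y) = 0`. Hence `f_R`, whose degree is at
most `q - 1`, is the same for all such `R`, and the multiplicities of its roots determine the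
secant sizes in (2). Since `∑ y, f_R(y)` is minus the coefficient of `y ^ (q - 1)`, and that
coefficient is again a product of all nonzero field elements, `|ℓ ∩ B| - q = 1` in the field.

Suppose that `B ∖ {P}` is blocking for some `P ∈ B`. If `P ∈ ℓ`, then every line through `P` other
than `ℓ` has exactly one further point of `B`, so `PR` is a bisecant, which is excluded. If `P ∉ ℓ`,
then the line joining `P` to a point of `ℓ ∖ B` is a tangent, which `B ∖ {P}` fails to block. -/

section FiniteField

variable {F ι : Type*} [Field F] [Fintype F]

theorem prod_univ_erase_zero_eq_neg_one [DecidableEq F] :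
    ∏ x ∈ Finset.univ.erase (0 : F), x = -1 := by
  have hunits : ∏ u : Fˣ, (u : F) = ∏ x ∈ Finset.univ.erase (0 : F), x :=
    Finset.prod_bij (fun u _ => (u : F)) (by simp) (fun _ _ _ _ h => Units.ext h)
      (fun x hx => ⟨Units.mk0 x (Finset.ne_of_mem_erase hx), by simp⟩) (by simp)
  rw [← hunits, ← Units.coe_prod, FiniteField.prod_univ_units_id_eq_neg_one, Units.val_neg,
    Units.val_one]

theorem prod_erase_sub_eq_neg_one [DecidableEq ι] {s : Finset ι} {g : ι → F}
    (hs : s.card = Fintype.card F) (hg : Set.InjOn g s) {r : ι} (hr : r ∈ s) :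
    ∏ i ∈ s.erase r, (g i - g r) = -1 := by
  classical
  have hinj : Set.InjOn (fun i => g i - g r) (s.erase r) := fun i hi j hj hij =>
    hg (Finset.mem_of_mem_erase hi) (Finset.mem_of_mem_erase hj) (sub_left_injective hij)
  have hmaps : Set.MapsTo (fun i => g i - g r) (s.erase r) (Finset.univ.erase (0 : F)) := by
    intro i hi
    have hir := Finset.mem_erase.mp hi
    simpa [sub_eq_zero] using hg.ne hir.2 hr hir.1
  have hsurj := Finset.surjOn_of_injOn_of_card_le _ hmaps hinj <| by
    simp [Finset.card_erase_of_mem, hr, hs]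
  rw [← prod_univ_erase_zero_eq_neg_one (F := F)]
  exact Finset.prod_nbij _ hmaps hinj hsurj fun _ _ => rfl

theorem sum_pow_card_sub_one_eq_neg_one : ∑ y : F, y ^ (Fintype.card F - 1) = -1 := by
  classical
  have hcard : 1 < Fintype.card F := Fintype.one_lt_card
  rw [← Finset.sum_erase_add _ _ (Finset.mem_univ (0 : F)), zero_pow (by omega), add_zero,
    Finset.sum_congr rfl fun y hy =>
      FiniteField.pow_card_sub_one_eq_one y (Finset.ne_of_mem_erase hy)]
  simp [Finset.card_erase_of_mem, Nat.cast_sub hcard.le]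

theorem sum_eval_eq_neg_coeff {f : Polynomial F} (hf : f.natDegree ≤ Fintype.card F - 1) :
    ∑ y : F, f.eval y = -f.coeff (Fintype.card F - 1) := by
  have hlow : ∀ i ∈ Finset.range (Fintype.card F - 1), ∑ y : F, f.coeff i * y ^ i = 0 :=
    fun i hi => by
      rw [← Finset.mul_sum, FiniteField.sum_pow_lt_card_sub_one F i (Finset.mem_range.mp hi),
        mul_zero]
  simp_rw [Polynomial.eval_eq_sum_range' (Nat.lt_succ_of_le hf)]
  rw [Finset.sum_comm, Finset.sum_range_succ, Finset.sum_eq_zero hlow, ← Finset.mul_sum,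
    sum_pow_card_sub_one_eq_neg_one, zero_add, mul_neg_one]

end FiniteField

section SlopePoly

open Polynomial

variable {F ι : Type*} [Field F] [DecidableEq ι] {s : Finset ι} {a b : ι → F} {r r' : ι}

/-- The polynomial whose roots, with multiplicity, are the slopes of the lines joining the point
`r` of an affine point set `s` to the other points of `s`, where `i` has coordinates
`(a i, b i)`; lines parallel to the second axis contribute constant factors. -/
noncomputable def slopePoly (s : Finset ι) (a b : ι → F) (r : ι) : F[X] :=
  ∏ i ∈ s.erase r, (C (a i - a r) * X - C (b i - b r))

theorem eval_slopePoly (y : F) :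
    (slopePoly s a b r).eval y = ∏ i ∈ s.erase r, ((y * a i - b i) - (y * a r - b r)) := by
  rw [slopePoly, eval_prod]
  refine Finset.prod_congr rfl fun i _ => ?_
  simp only [eval_sub, eval_mul, eval_C, eval_X]
  ring

theorem natDegree_slopePoly_le : (slopePoly s a b r).natDegree ≤ (s.erase r).card := by
  rw [slopePoly, Finset.card_eq_sum_ones]
  refine (natDegree_prod_le _ _).trans (Finset.sum_le_sum fun i _ => ?_)
  compute_degree

theorem coeff_slopePoly :
    (slopePoly s a b r).coeff (s.erase r).card = ∏ i ∈ s.erase r, (a i - a r) := by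
  rw [slopePoly, ← mul_one (s.erase r).card, coeff_prod_of_natDegree_le]
  · simp only [coeff_sub, coeff_C_mul, coeff_X_one, mul_one, coeff_C_of_ne_zero one_ne_zero,
      sub_zero]
  · intro i _
    compute_degree

theorem count_roots_slopePoly [DecidableEq F] (ha : Set.InjOn a s) (hr : r ∈ s) (y : F) :
    (slopePoly s a b r).roots.count y + 1 =
      (s.filter fun i => y * a i - b i = y * a r - b r).card := by
  have hne : ∀ i ∈ s.erase r, a i - a r ≠ 0 := fun i hi =>
    sub_ne_zero.mpr (ha.ne (Finset.mem_of_mem_erase hi) hr (Finset.ne_of_mem_erase hi))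
  have hfactor : ∀ i ∈ s.erase r, C (a i - a r) * X - C (b i - b r) ≠ 0 := fun i hi h =>
    hne i hi <| by simpa using congrArg (fun f => coeff f 1) h
  rw [← Finset.card_erase_add_one (a := r) (by simp [hr]), ← Finset.filter_erase,
    slopePoly, roots_prod _ _ (Finset.prod_ne_zero_iff.mpr hfactor), Multiset.count_bind,
    Finset.card_filter, add_left_inj]
  refine Finset.sum_congr rfl fun i hi => ?_
  rw [roots_C_mul_X_sub_C _ (hne i hi), Multiset.count_singleton]
  refine if_congr ?_ rfl rfl
  rw [inv_mul_eq_div, eq_div_iff (hne i hi)]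
  constructor <;> intro h <;> linear_combination h

variable [Fintype F]

theorem eval_slopePoly_eq_ite [DecidableEq F] {D : Finset F} (hs : s.card = Fintype.card F)
    (hr : r ∈ s) (hD : ∀ y ∈ D, ∃ i ∈ s, i ≠ r ∧ y * a i - b i = y * a r - b r)
    (hD' : ∀ y ∉ D, Set.InjOn (fun i => y * a i - b i) s) (y : F) :
    (slopePoly s a b r).eval y = if y ∈ D then 0 else -1 := by
  rw [eval_slopePoly]
  split_ifs with hy
  · obtain ⟨i, hi, hir, heq⟩ := hD y hy
    exact Finset.prod_eq_zero (Finset.mem_erase.mpr ⟨hir, hi⟩) (sub_eq_zero.mpr heq)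
  · exact prod_erase_sub_eq_neg_one hs (hD' y hy) hr

theorem card_cast_eq_one_of_eval_slopePoly [DecidableEq F] {D : Finset F}
    (hs : s.card = Fintype.card F) (ha : Set.InjOn a s) (hr : r ∈ s)
    (heval : ∀ y, (slopePoly s a b r).eval y = if y ∈ D then 0 else -1) : (D.card : F) = 1 := by
  have hdeg : (s.erase r).card = Fintype.card F - 1 := by rw [Finset.card_erase_of_mem hr, hs]
  have hvalues : ∑ y, (slopePoly s a b r).eval y = D.card := calc
    ∑ y, (slopePoly s a b r).eval y = ∑ y : F, ((if y ∈ D then 1 else 0) - 1) :=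
      Finset.sum_congr rfl fun y _ => by rw [heval]; split_ifs <;> simp
    _ = D.card := by simp [Finset.sum_sub_distrib]
  rw [← hvalues, sum_eval_eq_neg_coeff (hdeg ▸ natDegree_slopePoly_le), ← hdeg, coeff_slopePoly,
    prod_erase_sub_eq_neg_one hs ha hr, neg_neg]

theorem slopePoly_eq_of_eval_eq (hs : s.card = Fintype.card F) (hr : r ∈ s) (hr' : r' ∈ s)
    (heval : ∀ y, (slopePoly s a b r).eval y = (slopePoly s a b r').eval y) :
    slopePoly s a b r = slopePoly s a b r' := by
  have hdeg : ∀ t ∈ s, (slopePoly s a b t).degree < (Finset.univ : Finset F).card := fun t ht =>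
    degree_le_natDegree.trans_lt <| Nat.cast_lt.mpr <| natDegree_slopePoly_le.trans_lt <| by
      rw [Finset.card_univ, ← hs]
      exact Finset.card_erase_lt_of_mem ht
  exact eq_of_degrees_lt_of_eval_finset_eq Finset.univ (hdeg r hr) (hdeg r' hr') fun y _ => heval y

theorem card_filter_eq_of_eval_slopePoly_eq [DecidableEq F] (hs : s.card = Fintype.card F)
    (ha : Set.InjOn a s) (hr : r ∈ s) (hr' : r' ∈ s)
    (heval : ∀ y, (slopePoly s a b r).eval y = (slopePoly s a b r').eval y) (y : F) :
    (s.filter fun i => y * a i - b i = y * a r - b r).card =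
      (s.filter fun i => y * a i - b i = y * a r' - b r').card := by
  rw [← count_roots_slopePoly ha hr, ← count_roots_slopePoly ha hr',
    slopePoly_eq_of_eval_eq hs hr hr' heval]

end SlopePoly

section Pencils

open Module LinearMap

variable {F : Type*} [Field F] {φ f : Dual F (Fin 3 → F)} {L : PGLine F} {M P Q R : PGPoint F}

theorem pgMem_iff_rep_mem : pgMem P L ↔ P.rep ∈ L.val := by
  rw [pgMem, Projectivization.submodule_eq, Submodule.span_singleton_le_iff_mem]

theorem ncard_setOf_pgMem [Fintype F] (L : PGLine F) :
    {P | pgMem P L}.ncard = Fintype.card F + 1 := by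
  let g : Projectivization F L.val → PGPoint F :=
    Projectivization.map L.val.subtype L.val.injective_subtype
  have hrange : {P | pgMem P L} = Set.range g := by
    refine Set.Subset.antisymm (fun P hP => ?_) (Set.range_subset_iff.mpr fun x => ?_)
    · refine ⟨Projectivization.mk F ⟨P.rep, pgMem_iff_rep_mem.mp hP⟩ ?_, ?_⟩
      · simpa using P.rep_nonzero
      · exact (Projectivization.map_mk _ _ _ _).trans P.mk_rep
    · induction x using Projectivization.ind with
      | h v => simp [g, pgMem, Projectivization.map_mk]
  rw [hrange, ← Set.image_univ, Set.ncard_image_of_injective _ (Projectivization.map_injective _ _),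
    Set.ncard_univ, Projectivization.card_of_finrank_two F _ L.2, Nat.card_eq_fintype_card]

theorem exists_pgMem_notMem_of_nsec_le [Fintype F] {B : Set (PGPoint F)}
    (hB : nsec B L ≤ Fintype.card F) : ∃ M, pgMem M L ∧ M ∉ B := by
  by_contra! hsub
  have hall : {P ∈ B | pgMem P L} = {P | pgMem P L} :=
    Set.ext fun P => and_iff_right_of_imp (hsub P)
  rw [nsec, hall, ncard_setOf_pgMem] at hB
  omega

theorem not_isBlocking_diff_of_nsec_eq_one {B : Set (PGPoint F)} (hP : P ∈ B) (hPL : pgMem P L)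
    (hL : nsec B L = 1) : ¬ isBlocking (B \ {P}) := by
  intro hblock
  obtain ⟨S, ⟨hS, hSP⟩, hSL⟩ := hblock L
  obtain ⟨Q, hQ⟩ := Set.ncard_eq_one.mp hL
  have hSQ : S = Q := hQ.subset ⟨hS, hSL⟩
  have hPQ : P = Q := hQ.subset ⟨hP, hPL⟩
  exact hSP (hSQ.trans hPQ.symm)

theorem pgLine_eq_of_mem {L' : PGLine F} (hPQ : P ≠ Q) (hP : pgMem P L) (hQ : pgMem Q L)
    (hP' : pgMem P L') (hQ' : pgMem Q L') : L = L' := by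
  have hspan : ∀ K : PGLine F, pgMem P K → pgMem Q K →
      Submodule.span F (Set.range ![P.rep, Q.rep]) = K.val := by
    intro K hPK hQK
    refine Submodule.eq_of_le_of_finrank_eq (Submodule.span_le.mpr ?_) ?_
    · simpa [Set.pair_subset_iff] using ⟨pgMem_iff_rep_mem.mp hQK, pgMem_iff_rep_mem.mp hPK⟩
    · rw [finrank_span_eq_card (Projectivization.linearIndependent_pair_iff_ne.mpr hPQ),
        Fintype.card_fin, K.2]
  exact Subtype.ext ((hspan L hP hQ).symm.trans (hspan L' hP' hQ'))

theorem finrank_ker_eq_two {V : Type*} [AddCommGroup V] [Module F V] (hV : finrank F V = 3)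
    {g : Dual F V} (hg : g ≠ 0) : finrank F (ker g) = 2 := by
  have : FiniteDimensional F V := .of_finrank_pos (by omega)
  have := Dual.finrank_ker_add_one_of_ne_zero hg
  omega

/-- The line with equation `f = 0`. -/
def PGLine.ofDual (f : Dual F (Fin 3 → F)) (hf : f ≠ 0) : PGLine F :=
  ⟨ker f, finrank_ker_eq_two (finrank_fin_fun F) hf⟩

@[simp]
theorem pgMem_ofDual {hf : f ≠ 0} : pgMem P (PGLine.ofDual f hf) ↔ f P.rep = 0 :=
  pgMem_iff_rep_mem

theorem PGLine.exists_eq_ofDual (L : PGLine F) : ∃ f, ∃ hf : f ≠ 0, L = PGLine.ofDual f hf := by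
  have hlt : L.val < ⊤ := lt_top_iff_ne_top.mpr fun h => by
    have := L.2
    rw [h, finrank_top, finrank_fin_fun] at this
    omega
  obtain ⟨f, hf, hle⟩ := L.val.exists_le_ker_of_lt_top hlt
  refine ⟨f, hf, Subtype.ext (Submodule.eq_of_le_of_finrank_eq hle ?_)⟩
  exact L.2.trans (PGLine.ofDual f hf).2.symm

/-- `M` is the common point of the distinct lines `φ = 0` and `f = 0`, hence the vertex of the
pencil of lines `f = c * φ`. -/
structure IsPencilVertex (φ f : Dual F (Fin 3 → F)) (M : PGPoint F) : Prop where
  linearIndependent : LinearIndependent F ![φ, f]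
  left_eq_zero : φ M.rep = 0
  right_eq_zero : f M.rep = 0

theorem sub_smul_ne_zero_of_linearIndependent (h : LinearIndependent F ![φ, f]) (c : F) :
    f - c • φ ≠ 0 := fun hc =>
  (LinearIndependent.pair_iff' (h.ne_zero 0)).mp h c (sub_eq_zero.mp hc).symm

theorem IsPencilVertex.eq (hM : IsPencilVertex φ f M) (hφP : φ P.rep = 0) (hfP : f P.rep = 0) :
    P = M := by
  by_contra hPM
  have hlines : PGLine.ofDual φ (hM.linearIndependent.ne_zero 0) =
      PGLine.ofDual f (hM.linearIndependent.ne_zero 1) :=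
    pgLine_eq_of_mem hPM (pgMem_ofDual.mpr hφP) (pgMem_ofDual.mpr hM.left_eq_zero)
      (pgMem_ofDual.mpr hfP) (pgMem_ofDual.mpr hM.right_eq_zero)
  have hspan : f ∈ Submodule.span F (Set.range fun _ : Unit => φ) :=
    mem_span_of_iInf_ker_le_ker <| by
      rw [iInf_const]
      exact (congrArg Subtype.val hlines).le
  obtain ⟨c, hc⟩ := Submodule.mem_span_singleton.mp (by simpa using hspan)
  exact sub_smul_ne_zero_of_linearIndependent hM.linearIndependent c (sub_eq_zero.mpr hc.symm)

theorem exists_isPencilVertex (hφ : φ ≠ 0) (hM : φ M.rep = 0) : ∃ f, IsPencilVertex φ f M := by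
  have hlt : Submodule.span F {φ} < ker (Dual.eval F (Fin 3 → F) M.rep) := by
    refine Submodule.lt_of_le_of_finrank_lt_finrank
      ((Submodule.span_singleton_le_iff_mem _ _).mpr hM) ?_
    rw [finrank_span_singleton hφ, finrank_ker_eq_two]
    · exact one_lt_two
    · rw [Subspace.dual_finrank_eq, finrank_fin_fun]
    · exact (eval_apply_eq_zero_iff F _).not.mpr M.rep_nonzero
  obtain ⟨f, hfM, hf⟩ := SetLike.exists_of_lt hlt
  exact ⟨f, (LinearIndependent.pair_iff' hφ).mpr fun c hc =>
    hf (Submodule.mem_span_singleton.mpr ⟨c, hc⟩), hM, hfM⟩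

/-- The value of `f` at `P`, for the representative of `P` with `φ = 1`: an affine coordinate on
the complement of the line `φ = 0`. On that line it has the junk value `0`. -/
noncomputable def affineCoord (φ f : Dual F (Fin 3 → F)) (P : PGPoint F) : F :=
  f P.rep / φ P.rep

theorem affineCoord_smul_sub (a b : Dual F (Fin 3 → F)) (y : F) (P : PGPoint F) :
    affineCoord φ (y • a - b) P = y * affineCoord φ a P - affineCoord φ b P := by
  simp only [affineCoord, LinearMap.sub_apply, LinearMap.smul_apply, smul_eq_mul, sub_div,
    mul_div_assoc]

theorem sub_smul_apply_rep_eq_zero_iff (hP : φ P.rep ≠ 0) (c : F) :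
    (f - c • φ) P.rep = 0 ↔ affineCoord φ f P = c := by
  rw [affineCoord, div_eq_iff hP, LinearMap.sub_apply, LinearMap.smul_apply, smul_eq_mul,
    sub_eq_zero]

namespace IsPencilVertex

variable (hM : IsPencilVertex φ f M) (hR : φ R.rep ≠ 0)
include hM hR

theorem eq_ofDual (hRL : pgMem R L) (hML : pgMem M L) :
    L = PGLine.ofDual (f - affineCoord φ f R • φ)
      (sub_smul_ne_zero_of_linearIndependent hM.linearIndependent _) := by
  have hRM : R ≠ M := fun h => hR (h ▸ hM.left_eq_zero)
  refine pgLine_eq_of_mem hRM hRL hML (pgMem_ofDual.mpr ?_) (pgMem_ofDual.mpr ?_)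
  · exact (sub_smul_apply_rep_eq_zero_iff hR _).mpr rfl
  · simp [hM.left_eq_zero, hM.right_eq_zero]

theorem exists_pgLine : ∃ L : PGLine F, pgMem R L ∧ pgMem M L := by
  refine ⟨PGLine.ofDual (f - affineCoord φ f R • φ)
      (sub_smul_ne_zero_of_linearIndependent hM.linearIndependent _), ?_, ?_⟩
  · exact pgMem_ofDual.mpr ((sub_smul_apply_rep_eq_zero_iff hR _).mpr rfl)
  · simp [hM.left_eq_zero, hM.right_eq_zero]

theorem pgMem_iff (hRL : pgMem R L) (hML : pgMem M L) :
    pgMem P L ↔ P = M ∨ φ P.rep ≠ 0 ∧ affineCoord φ f P = affineCoord φ f R := by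
  rw [hM.eq_ofDual hR hRL hML, pgMem_ofDual]
  by_cases hP : φ P.rep = 0
  · have hPM : f P.rep = 0 ↔ P = M := ⟨hM.eq hP, fun h => h ▸ hM.right_eq_zero⟩
    simpa [hP] using hPM
  · have hPM : P ≠ M := fun h => hP (h ▸ hM.left_eq_zero)
    rw [sub_smul_apply_rep_eq_zero_iff hP]
    simp [hP, hPM]

end IsPencilVertex

end Pencils

section AffinePart

open Module

variable {F : Type*} [Field F] [Fintype F] {φ f : Dual F (Fin 3 → F)} {B : Set (PGPoint F)}
  {L : PGLine F} {M R : PGPoint F}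

/-- The points of `B` off the line `φ = 0`. -/
noncomputable def affinePart (B : Set (PGPoint F)) (φ : Dual F (Fin 3 → F)) :
    Finset (PGPoint F) :=
  (Set.toFinite {P ∈ B | φ P.rep ≠ 0}).toFinset

@[simp]
theorem mem_affinePart {P : PGPoint F} : P ∈ affinePart B φ ↔ P ∈ B ∧ φ P.rep ≠ 0 := by
  simp [affinePart]

theorem nsec_ofDual_add_card_affinePart (B : Set (PGPoint F)) (hφ : φ ≠ 0) :
    nsec B (PGLine.ofDual φ hφ) + (affinePart B φ).card = B.ncard := by
  have hoff : {P ∈ B | φ P.rep ≠ 0} = B \ {P ∈ B | pgMem P (PGLine.ofDual φ hφ)} := by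
    ext P
    simp
  rw [nsec, affinePart, ← Set.ncard_eq_toFinset_card, hoff, add_comm]
  exact Set.ncard_sdiff_add_ncard_of_subset (Set.sep_subset _ _)

-- The lines `f = c * φ` are met by `S` off `φ = 0`, so `affineCoord φ f` takes every value on the
-- affine part of `B`, which has no more than `q` points.
theorem injOn_affineCoord_of_isBlocking {S : Set (PGPoint F)} (hSB : S ⊆ B) (hS : isBlocking S)
    (hcard : (affinePart B φ).card = Fintype.card F) (hf : LinearIndependent F ![φ, f])
    (hdisj : ∀ P ∈ S, φ P.rep = 0 → f P.rep ≠ 0) :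
    Set.InjOn (affineCoord φ f) (affinePart B φ) := by
  refine Finset.injOn_of_surjOn_of_card_le (t := Finset.univ) _ (by simp [Set.MapsTo])
    (fun c _ => ?_) hcard.le
  obtain ⟨P, hP, hPL⟩ := hS (PGLine.ofDual _ (sub_smul_ne_zero_of_linearIndependent hf c))
  rw [pgMem_ofDual] at hPL
  have hφP : φ P.rep ≠ 0 := fun h => hdisj P hP h (by simpa [h] using hPL)
  exact ⟨P, mem_affinePart.mpr ⟨hSB hP, hφP⟩, (sub_smul_apply_rep_eq_zero_iff hφP c).mp hPL⟩

namespace IsPencilVertex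

variable (hM : IsPencilVertex φ f M)
include hM

open Classical in
theorem nsec_eq (hR : φ R.rep ≠ 0) (hRL : pgMem R L) (hML : pgMem M L) :
    nsec B L = (if M ∈ B then 1 else 0) +
      ((affinePart B φ).filter fun P => affineCoord φ f P = affineCoord φ f R).card := by
  set U := (affinePart B φ).filter fun P => affineCoord φ f P = affineCoord φ f R with hU
  have hMU : M ∉ U := by simp [hU, hM.left_eq_zero]
  have hpoints : {P ∈ B | pgMem P L} = (if M ∈ B then insert M U else U : Finset (PGPoint F)) := by
    ext P
    rw [Set.mem_ofPred_eq, hM.pgMem_iff hR hRL hML]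
    split_ifs with hMB <;> simp [hU] <;> grind
  rw [nsec, hpoints, Set.ncard_coe_finset]
  split_ifs
  · rw [Finset.card_insert_of_notMem hMU, add_comm]
  · rw [zero_add]

open Classical in
theorem nsec_eq_of_isBlocking_diff (hB : isBlocking (B \ {M}))
    (hcard : (affinePart B φ).card = Fintype.card F) (hR : R ∈ affinePart B φ)
    (hRL : pgMem R L) (hML : pgMem M L) : nsec B L = (if M ∈ B then 1 else 0) + 1 := by
  have hinj := injOn_affineCoord_of_isBlocking Set.sdiff_subset hB hcard
    hM.linearIndependent fun P hP hφP hfP => hP.2 (hM.eq hφP hfP)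
  have hfiber : ((affinePart B φ).filter fun P => affineCoord φ f P = affineCoord φ f R) = {R} := by
    ext P
    rw [Finset.mem_filter, Finset.mem_singleton]
    exact ⟨fun h => hinj h.1 hR h.2, by rintro rfl; exact ⟨hR, rfl⟩⟩
  rw [hM.nsec_eq (mem_affinePart.mp hR).2 hRL hML, hfiber, Finset.card_singleton]

theorem exists_ne_affineCoord_eq (hMB : M ∈ B) (hR : R ∈ affinePart B φ)
    (hbisecant : ∀ L : PGLine F, pgMem R L → nsec B L ≠ 2) :
    ∃ P ∈ affinePart B φ, P ≠ R ∧ affineCoord φ f P = affineCoord φ f R := by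
  classical
  have hφR := (mem_affinePart.mp hR).2
  obtain ⟨L, hRL, hML⟩ := hM.exists_pgLine hφR
  have hcard := hbisecant L hRL
  rw [hM.nsec_eq hφR hRL hML, if_pos hMB] at hcard
  have hRmem : R ∈ (affinePart B φ).filter fun P => affineCoord φ f P = affineCoord φ f R :=
    Finset.mem_filter.mpr ⟨hR, rfl⟩
  have hpos := Finset.card_pos.mpr ⟨R, hRmem⟩
  have hlt : 1 < ((affinePart B φ).filter fun P =>
      affineCoord φ f P = affineCoord φ f R).card := by omega
  obtain ⟨P, hP, hPR⟩ := Finset.exists_mem_ne hlt R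
  exact ⟨P, (Finset.mem_filter.mp hP).1, hPR, (Finset.mem_filter.mp hP).2⟩

end IsPencilVertex

theorem nsec_eq_one_of_notMem (hB : isBlocking B)
    (hcard : (affinePart B φ).card = Fintype.card F) (hR : R ∈ affinePart B φ)
    (hM : φ M.rep = 0) (hMB : M ∉ B) (hRL : pgMem R L) (hML : pgMem M L) : nsec B L = 1 := by
  have hφ : φ ≠ 0 := fun h => (mem_affinePart.mp hR).2 (by rw [h, LinearMap.zero_apply])
  obtain ⟨f, hf⟩ := exists_isPencilVertex hφ hM
  rw [hf.nsec_eq_of_isBlocking_diff (by rwa [Set.sdiff_singleton_eq_self hMB]) hcard hR hRL hML,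
    if_neg hMB]

theorem isMinimalBlocking_of_forall_nsec_ne_two (hB : isBlocking B)
    (hcard : (affinePart B φ).card = Fintype.card F) (hM : φ M.rep = 0) (hMB : M ∉ B)
    (hR : R ∈ affinePart B φ) (hbisecant : ∀ L : PGLine F, pgMem R L → nsec B L ≠ 2) :
    isMinimalBlocking B := by
  have hφR := (mem_affinePart.mp hR).2
  have hφ : φ ≠ 0 := fun h => hφR (by rw [h, LinearMap.zero_apply])
  refine ⟨hB, fun P hP => ?_⟩
  by_cases hφP : φ P.rep = 0
  · obtain ⟨f, hf⟩ := exists_isPencilVertex hφ hφP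
    obtain ⟨L, hRL, hPL⟩ := hf.exists_pgLine hφR
    intro hblock
    apply hbisecant L hRL
    rw [hf.nsec_eq_of_isBlocking_diff hblock hcard hR hRL hPL, if_pos hP]
  · obtain ⟨f, hf⟩ := exists_isPencilVertex hφ hM
    obtain ⟨L, hPL, hML⟩ := hf.exists_pgLine hφP
    exact not_isBlocking_diff_of_nsec_eq_one hP hPL <|
      nsec_eq_one_of_notMem hB hcard (mem_affinePart.mpr ⟨hP, hφP⟩) hM hMB hPL hML

end AffinePart

section Directions

open Module

variable {F : Type*} [Field F] {φ a b : Dual F (Fin 3 → F)} {B : Set (PGPoint F)}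
  {V M : PGPoint F}

/-- `φ`, `a`, `b` are homogeneous coordinates for which `φ = 0` is the line at infinity, and the
point at infinity `V` of the lines on which `a` is constant does not belong to `B`. -/
structure IsSlopeFrame (B : Set (PGPoint F)) (φ a b : Dual F (Fin 3 → F)) (V : PGPoint F) :
    Prop where
  isPencilVertex : IsPencilVertex φ a V
  apply_rep_ne_zero : b V.rep ≠ 0
  notMem : V ∉ B

theorem exists_isSlopeFrame (hφ : φ ≠ 0) (hV : φ V.rep = 0) (hVB : V ∉ B) :
    ∃ a b, IsSlopeFrame B φ a b V := by
  obtain ⟨a, ha⟩ := exists_isPencilVertex hφ hV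
  obtain ⟨b, hb⟩ := Projective.exists_dual_ne_zero F V.rep_nonzero
  exact ⟨a, b, ha, hb, hVB⟩

namespace IsSlopeFrame

variable (h : IsSlopeFrame B φ a b V)
include h

theorem linearIndependent (y : F) : LinearIndependent F ![φ, y • a - b] := by
  refine (LinearIndependent.pair_iff' (h.isPencilVertex.linearIndependent.ne_zero 0)).mpr
    fun c hc => h.apply_rep_ne_zero ?_
  simpa [h.isPencilVertex.left_eq_zero, h.isPencilVertex.right_eq_zero] using
    LinearMap.congr_fun hc V.rep

-- On the line `φ = 0`, the value `affineCoord a b M = b / a` is the slope of the lines through `M`.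
theorem isPencilVertex_iff {y : F} (hM : φ M.rep = 0) (hMB : M ∈ B) :
    IsPencilVertex φ (y • a - b) M ↔ affineCoord a b M = y := by
  have haM : a M.rep ≠ 0 := fun haM => h.notMem (h.isPencilVertex.eq hM haM ▸ hMB)
  rw [affineCoord, div_eq_iff haM]
  refine ⟨fun hy => (sub_eq_zero.mp hy.right_eq_zero).symm, fun hy => ?_⟩
  exact ⟨h.linearIndependent y, hM, sub_eq_zero.mpr hy.symm⟩

end IsSlopeFrame

variable [Fintype F]

/-- The slopes of the affine lines whose point at infinity, on the line `φ = 0`, belongs to `B`. -/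
noncomputable def slopeSet (B : Set (PGPoint F)) (φ a b : Dual F (Fin 3 → F)) : Finset F :=
  (Set.toFinite (affineCoord a b '' {M ∈ B | φ M.rep = 0})).toFinset

namespace IsSlopeFrame

variable (h : IsSlopeFrame B φ a b V)
include h

theorem mem_slopeSet {y : F} :
    y ∈ slopeSet B φ a b ↔ ∃ M ∈ B, IsPencilVertex φ (y • a - b) M := by
  simp only [slopeSet, Set.Finite.mem_toFinset, Set.mem_image, Set.mem_ofPred_eq]
  refine exists_congr fun M => ⟨fun hM => ?_, fun hM => ?_⟩
  · exact ⟨hM.1.1, (h.isPencilVertex_iff hM.1.2 hM.1.1).mpr hM.2⟩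
  · exact ⟨⟨hM.1, hM.2.left_eq_zero⟩, (h.isPencilVertex_iff hM.2.left_eq_zero hM.1).mp hM.2⟩

theorem card_slopeSet (hφ : φ ≠ 0) :
    (slopeSet B φ a b).card = nsec B (PGLine.ofDual φ hφ) := by
  have hinj : Set.InjOn (affineCoord a b) {M ∈ B | φ M.rep = 0} := fun M hM N hN hMN =>
    have hvertex := (h.isPencilVertex_iff hN.2 hN.1).mpr rfl
    hvertex.eq hM.2 ((h.isPencilVertex_iff hM.2 hM.1).mpr hMN).right_eq_zero
  rw [slopeSet, ← Set.ncard_eq_toFinset_card, hinj.ncard_image, nsec]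
  simp only [pgMem_ofDual]

variable (hB : isBlocking B) (hcard : (affinePart B φ).card = Fintype.card F)
include hB hcard

theorem injOn_affineCoord : Set.InjOn (affineCoord φ a) (affinePart B φ) :=
  injOn_affineCoord_of_isBlocking subset_rfl hB hcard h.isPencilVertex.linearIndependent
    fun _ hP hφP haP => h.notMem (h.isPencilVertex.eq hφP haP ▸ hP)

variable {R R' : PGPoint F} (hR : R ∈ affinePart B φ)
  (hbisecant : ∀ L : PGLine F, pgMem R L → nsec B L ≠ 2)
include hR hbisecant

theorem eval_slopePoly [DecidableEq (PGPoint F)] [DecidableEq F] (y : F) :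
    (slopePoly (affinePart B φ) (affineCoord φ a) (affineCoord φ b) R).eval y =
      if y ∈ slopeSet B φ a b then 0 else -1 := by
  refine eval_slopePoly_eq_ite hcard hR (fun y hy => ?_) (fun y hy => ?_) y <;>
    simp_rw [← affineCoord_smul_sub]
  · obtain ⟨M, hMB, hM⟩ := h.mem_slopeSet.mp hy
    exact hM.exists_ne_affineCoord_eq hMB hR hbisecant
  · exact injOn_affineCoord_of_isBlocking subset_rfl hB hcard (h.linearIndependent y)
      fun P hP hφP hfP => hy (h.mem_slopeSet.mpr ⟨P, hP, h.linearIndependent y, hφP, hfP⟩)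

theorem nsec_cast_eq_one (hφ : φ ≠ 0) : (nsec B (PGLine.ofDual φ hφ) : F) = 1 := by
  classical
  rw [← h.card_slopeSet hφ]
  exact card_cast_eq_one_of_eval_slopePoly hcard (h.injOn_affineCoord hB hcard) hR
    (h.eval_slopePoly hB hcard hR hbisecant)

theorem nsec_eq_nsec (hR' : R' ∈ affinePart B φ)
    (hbisecant' : ∀ L : PGLine F, pgMem R' L → nsec B L ≠ 2) (hM : φ M.rep = 0)
    {L L' : PGLine F} (hRL : pgMem R L) (hML : pgMem M L) (hRL' : pgMem R' L')
    (hML' : pgMem M L') : nsec B L = nsec B L' := by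
  classical
  by_cases hMB : M ∈ B
  · have hvertex := (h.isPencilVertex_iff hM hMB).mpr rfl
    rw [hvertex.nsec_eq (mem_affinePart.mp hR).2 hRL hML,
      hvertex.nsec_eq (mem_affinePart.mp hR').2 hRL' hML', add_right_inj]
    simp_rw [affineCoord_smul_sub]
    refine card_filter_eq_of_eval_slopePoly_eq hcard (h.injOn_affineCoord hB hcard) hR hR'
      (fun y => ?_) _
    rw [h.eval_slopePoly hB hcard hR hbisecant, h.eval_slopePoly hB hcard hR' hbisecant']
  · rw [nsec_eq_one_of_notMem hB hcard hR hM hMB hRL hML,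
      nsec_eq_one_of_notMem hB hcard hR' hM hMB hRL' hML']

end IsSlopeFrame

end Directions

/-- Let `B` be a blocking set of Rédei type in `PG(2,q)`, `q = p^h`, with Rédei line `ℓ`.
(1) If there is a point in `B ∖ ℓ` not contained in any bisecant of `B`, then `B` is minimal
    and `|ℓ ∩ B| ≡ 1 (mod p)`.
(2) If `R, R' ∈ B ∖ ℓ` are such that neither is contained in a bisecant of `B`, then for
    every `M ∈ ℓ` the lines `RM` and `R'M` meet `B` in the same number of points. -/
theorem stmt_1 {F : Type*} [Field F] [Fintype F] (p h q : ℕ) (hp : p.Prime) (hq : q = p ^ h)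
    (hcard : Fintype.card F = q)
    (B : Set (PGPoint F)) (ℓ : PGLine F) (hB : isRedeiWithLine q B ℓ) :
    ((∃ R ∈ B, ¬ pgMem R ℓ ∧ ∀ L : PGLine F, pgMem R L → nsec B L ≠ 2) →
      isMinimalBlocking B ∧ nsec B ℓ ≡ 1 [MOD p]) ∧
    (∀ R ∈ B, ∀ R' ∈ B, ¬ pgMem R ℓ → ¬ pgMem R' ℓ →
      (∀ L : PGLine F, pgMem R L → nsec B L ≠ 2) →
      (∀ L : PGLine F, pgMem R' L → nsec B L ≠ 2) →
      ∀ M : PGPoint F, pgMem M ℓ →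
        ∀ L L' : PGLine F, pgMem R L → pgMem M L → pgMem R' L' → pgMem M L' →
          nsec B L = nsec B L') := by
  obtain ⟨hblock, hle, hRedei⟩ := hB
  obtain ⟨φ, hφ, rfl⟩ := ℓ.exists_eq_ofDual
  have hU : (affinePart B φ).card = Fintype.card F := by
    have := nsec_ofDual_add_card_affinePart B hφ
    omega
  obtain ⟨V, hV, hVB⟩ : ∃ V, pgMem V (PGLine.ofDual φ hφ) ∧ V ∉ B :=
    exists_pgMem_notMem_of_nsec_le (by omega)
  obtain ⟨a, b, hframe⟩ := exists_isSlopeFrame hφ (pgMem_ofDual.mp hV) hVB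
  simp only [pgMem_ofDual] at hV ⊢
  refine ⟨?_, ?_⟩
  · rintro ⟨R, hRB, hφR, hbisecant⟩
    have hR := mem_affinePart.mpr ⟨hRB, hφR⟩
    refine ⟨isMinimalBlocking_of_forall_nsec_ne_two hblock hU hV hVB hR hbisecant, ?_⟩
    have : Fact p.Prime := ⟨hp⟩
    have : CharP F p := charP_of_card_eq_prime_pow (hcard.trans hq)
    rw [← CharP.natCast_eq_natCast F p, Nat.cast_one]
    exact hframe.nsec_cast_eq_one hblock hU hR hbisecant hφ
  · intro R hRB R' hRB' hφR hφR' hbisecant hbisecant' M hM L L' hRL hML hRL' hML'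
    exact hframe.nsec_eq_nsec hblock hU (mem_affinePart.mpr ⟨hRB, hφR⟩) hbisecant
      (mem_affinePart.mpr ⟨hRB', hφR'⟩) hbisecant' hM hRL hML hRL' hML'
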